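/- Define, for integers a ≥ 2, R(a) = [ (32a²(a²−1) − 6)(4a+1)/(4a) ] / [ (4a²+2)(4a²+1)(4a²−3)(a+1) ] multiplied by the ratio of binomial coefficients binom(8a²−1, 4a²−1) · binom(8a²−5, 4a²−1) / ( binom(8a²+2a−1, 4a²+a−1) · binom(8a²−2a−5, 4a²+a−1) ). Then, with α = 1/a, as a → ∞ one has R(a) = (e/2)α³ + o(α³), where e is Euler's number. -/

import Mathlib

open Filter Asymptotics

/-- The ratio of binomial coefficients
`binom(8a²−1, 4a²−1) binom(8a²−5, 4a²−1) / (binom(8a²+2a−1, 4a²+a−1) binom(8a²−2a−5, 4a²+a−1))`. -/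
noncomputable def binRatio (a : ℕ) : ℝ :=
  ((Nat.choose (8 * a ^ 2 - 1) (4 * a ^ 2 - 1) : ℝ) *
      (Nat.choose (8 * a ^ 2 - 5) (4 * a ^ 2 - 1) : ℝ)) /
    ((Nat.choose (8 * a ^ 2 + 2 * a - 1) (4 * a ^ 2 + a - 1) : ℝ) *
      (Nat.choose (8 * a ^ 2 - 2 * a - 5) (4 * a ^ 2 + a - 1) : ℝ))

/-- `R(a) = [(32a²(a²−1) − 6)(4a+1)/(4a)] / [(4a²+2)(4a²+1)(4a²−3)(a+1)]` times the
binomial-coefficient ratio `binRatio a`. -/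
noncomputable def Rfn (a : ℕ) : ℝ :=
  ((32 * (a : ℝ) ^ 2 * ((a : ℝ) ^ 2 - 1) - 6) * (4 * (a : ℝ) + 1) / (4 * (a : ℝ))) /
      ((4 * (a : ℝ) ^ 2 + 2) * (4 * (a : ℝ) ^ 2 + 1) * (4 * (a : ℝ) ^ 2 - 3) * ((a : ℝ) + 1)) *
    binRatio a

noncomputable def fpr (D s t : ℝ) (c a : ℕ) : ℝ :=
  ∏ i ∈ Finset.range (c * a), (1 + (s * a + t + i) / (D * (a : ℝ) ^ 2))

theorem log_bd (x : ℝ) (hx : |x| ≤ 1 / 2) : |Real.log (1 + x) - x| ≤ 2 * x ^ 2 := by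
  have h := Real.abs_log_sub_add_sum_range_le (x := -x) (by rw [abs_neg]; linarith) 1
  simp only [Finset.sum_range_one, abs_neg] at h
  norm_num at h
  have e : |Real.log (1 + x) - x| = |-x + Real.log (1 + x)| := by congr 1; ring
  rw [e]
  refine h.trans ?_
  rw [div_le_iff₀ (by linarith)]
  nlinarith [sq_nonneg x]

theorem sum_lin (D s t : ℝ) (n : ℕ) (b : ℝ) :
    ∑ i ∈ Finset.range n, ((s * b + t + i) / (D * b ^ 2))
      = (n * (s * b + t) + n * (n - 1) / 2) / (D * b ^ 2) := by
  induction n with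
  | zero => simp
  | succ k ih =>
    rw [Finset.sum_range_succ, ih, ← add_div]
    push_cast
    congr 1
    ring

theorem fpr_tendsto (D s t : ℝ) (hD : 0 < D) (c : ℕ) :
    Tendsto (fpr D s t c) atTop (nhds (Real.exp (s * c / D + (c : ℝ) ^ 2 / (2 * D)))) := by
  set K : ℝ := (|s| + |t| + c) / D with hK
  have hK0 : 0 ≤ K := by positivity
  have hinv : Tendsto (fun a : ℕ => ((a : ℝ))⁻¹) atTop (nhds 0) := tendsto_inv_atTop_nhds_zero_nat
  have hx : ∀ a : ℕ, 0 < a → ∀ i ∈ Finset.range (c * a),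
      |(s * a + t + i) / (D * (a : ℝ) ^ 2)| ≤ K / a := by
    intro a ha i hi
    have ha1 : (1 : ℝ) ≤ a := by exact_mod_cast ha
    have hi' : (i : ℝ) ≤ c * a := by exact_mod_cast (Finset.mem_range.mp hi).le
    rw [abs_div, abs_of_pos (show 0 < D * (a : ℝ) ^ 2 by positivity), hK, div_div,
      div_le_div_iff₀ (by positivity) (by positivity)]
    have h1 : |s * a + t + i| ≤ (|s| + |t| + c) * a := by
      calc |s * a + t + i| ≤ |s * a| + |t| + |(i : ℝ)| := abs_add_three _ _ _
        _ = |s| * a + |t| + i := by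
          rw [abs_mul, abs_of_nonneg (show (0 : ℝ) ≤ a by positivity),
            abs_of_nonneg (show (0 : ℝ) ≤ i by positivity)]
        _ ≤ _ := by nlinarith [abs_nonneg t]
    calc |s * a + t + i| * (D * a) ≤ ((|s| + |t| + c) * a) * (D * a) := by gcongr
      _ = _ := by ring
  have hsmall : ∀ᶠ a : ℕ in atTop, K / a ≤ 1 / 2 := by
    have : Tendsto (fun a : ℕ => K / (a : ℝ)) atTop (nhds 0) := by
      simpa [div_eq_mul_inv] using hinv.const_mul K
    exact this.eventually_le_const (by norm_num)
  have hlin : Tendsto (fun a : ℕ => ∑ i ∈ Finset.range (c * a),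
      ((s * a + t + i) / (D * (a : ℝ) ^ 2))) atTop
      (nhds (s * c / D + (c : ℝ) ^ 2 / (2 * D))) := by
    have h2 : Tendsto (fun a : ℕ => (s * c / D + (c : ℝ) ^ 2 / (2 * D))
        + ((c * t - c / 2) / D) * ((a : ℝ))⁻¹) atTop
        (nhds ((s * c / D + (c : ℝ) ^ 2 / (2 * D)) + ((c * t - c / 2) / D) * 0)) :=
      (hinv.const_mul _).const_add _
    rw [mul_zero, add_zero] at h2
    refine h2.congr' ?_
    filter_upwards [eventually_gt_atTop 0] with a ha
    have : (a : ℝ) ≠ 0 := by positivity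
    rw [sum_lin]
    push_cast
    field_simp
    ring
  have herr : Tendsto (fun a : ℕ => ∑ i ∈ Finset.range (c * a),
      (Real.log (1 + (s * a + t + i) / (D * (a : ℝ) ^ 2))
        - (s * a + t + i) / (D * (a : ℝ) ^ 2))) atTop (nhds 0) := by
    have h3 : Tendsto (fun a : ℕ => (c * (2 * K ^ 2)) * ((a : ℝ))⁻¹) atTop (nhds 0) := by
      simpa using hinv.const_mul (c * (2 * K ^ 2))
    refine squeeze_zero_norm' ?_ h3
    filter_upwards [eventually_gt_atTop 0, hsmall] with a ha hs
    have : (a : ℝ) ≠ 0 := by positivity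
    rw [Real.norm_eq_abs]
    refine (Finset.abs_sum_le_sum_abs _ _).trans ?_
    calc _ ≤ ∑ i ∈ Finset.range (c * a), 2 * (K / a) ^ 2 := by
          refine Finset.sum_le_sum fun i hi => ?_
          refine (log_bd _ ((hx a ha i hi).trans hs)).trans ?_
          have := hx a ha i hi
          rw [← sq_abs]
          gcongr
      _ = _ := by
          rw [Finset.sum_const, Finset.card_range, nsmul_eq_mul]
          push_cast
          field_simp
  have htot := herr.add hlin
  rw [zero_add] at htot
  refine ((Real.continuous_exp.tendsto _).comp htot).congr' ?_
  filter_upwards [eventually_gt_atTop 0, hsmall] with a ha hs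
  rw [Function.comp_apply, ← Finset.sum_add_distrib, Real.exp_sum, fpr]
  refine Finset.prod_congr rfl fun i hi => ?_
  rw [sub_add_cancel, Real.exp_log]
  have := (abs_le.mp ((hx a ha i hi).trans hs)).1
  linarith

theorem fact_fpr (D s t : ℝ) (hD : 0 < D) (c a m : ℕ) (ha : 0 < a)
    (hm : (m : ℝ) + 1 = D * (a : ℝ) ^ 2 + s * a + t) :
    ((m + c * a).factorial : ℝ) = m.factorial * ((D * (a : ℝ) ^ 2) ^ (c * a) * fpr D s t c a) := by
  rw [← Nat.factorial_mul_ascFactorial, Nat.ascFactorial_eq_prod_range, fpr,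
    ← Finset.card_range (c * a), ← Finset.prod_const, Finset.card_range, ← Finset.prod_mul_distrib]
  push_cast
  congr 1
  refine Finset.prod_congr rfl fun i _ => ?_
  rw [hm]
  have : (a : ℝ) ≠ 0 := by positivity
  field_simp
  ring

theorem binRatio_eq (a : ℕ) (ha : 2 ≤ a) :
    binRatio a = fpr 4 0 0 1 a ^ 2 * fpr 4 0 1 1 a * fpr 8 (-2) (-4) 2 a /
      (fpr 4 (-3) (-3) 3 a * fpr 8 0 0 2 a) := by
  obtain ⟨p, hp⟩ : ∃ p, 4 * a ^ 2 = p + 3 * a + 4 :=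
    ⟨4 * a ^ 2 - 3 * a - 4, by
      have : 2 * a ≤ a ^ 2 := by nlinarith
      omega⟩
  have hpr : (p : ℝ) = 4 * (a : ℝ) ^ 2 - 3 * a - 4 := by
    have : (4 * (a : ℝ) ^ 2) = p + 3 * a + 4 := by exact_mod_cast hp
    linarith
  have ha0 : 0 < a := by omega
  have f1 := fact_fpr 4 0 0 (by norm_num) 1 a (p + 3 * a + 3) ha0 (by push_cast; rw [hpr]; ring)
  have f2 := fact_fpr 4 0 1 (by norm_num) 1 a (p + 3 * a + 4) ha0 (by push_cast; rw [hpr]; ring)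
  have f3 := fact_fpr 4 (-3) (-3) (by norm_num) 3 a p ha0 (by push_cast; rw [hpr]; ring)
  have f4 := fact_fpr 8 0 0 (by norm_num) 2 a (2 * p + 6 * a + 7) ha0
    (by push_cast; rw [hpr]; ring)
  have f5 := fact_fpr 8 (-2) (-4) (by norm_num) 2 a (2 * p + 4 * a + 3) ha0
    (by push_cast; rw [hpr]; ring)
  have c1 : ((8 * a ^ 2 - 1).choose (4 * a ^ 2 - 1) : ℝ) =
      (2 * p + 6 * a + 7).factorial / ((p + 3 * a + 3).factorial * (p + 3 * a + 4).factorial) := by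
    rw [show 8 * a ^ 2 - 1 = (p + 3 * a + 3) + (p + 3 * a + 4) by omega,
      show 4 * a ^ 2 - 1 = p + 3 * a + 3 by omega, Nat.cast_add_choose]
    congr 3; ring
  have c2 : ((8 * a ^ 2 - 5).choose (4 * a ^ 2 - 1) : ℝ) =
      (2 * p + 4 * a + 3 + 2 * a).factorial / ((p + 3 * a + 3).factorial * (p + 3 * a).factorial) := by
    rw [show 8 * a ^ 2 - 5 = (p + 3 * a + 3) + (p + 3 * a) by omega,
      show 4 * a ^ 2 - 1 = p + 3 * a + 3 by omega, Nat.cast_add_choose]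
    congr 3; ring
  have c3 : ((8 * a ^ 2 + 2 * a - 1).choose (4 * a ^ 2 + a - 1) : ℝ) =
      (2 * p + 6 * a + 7 + 2 * a).factorial /
        ((p + 3 * a + 3 + 1 * a).factorial * (p + 3 * a + 4 + 1 * a).factorial) := by
    rw [show 8 * a ^ 2 + 2 * a - 1 = (p + 3 * a + 3 + 1 * a) + (p + 3 * a + 4 + 1 * a) by omega,
      show 4 * a ^ 2 + a - 1 = p + 3 * a + 3 + 1 * a by omega, Nat.cast_add_choose]
    congr 3; ring
  have c4 : ((8 * a ^ 2 - 2 * a - 5).choose (4 * a ^ 2 + a - 1) : ℝ) =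
      (2 * p + 4 * a + 3).factorial /
        ((p + 3 * a + 3 + 1 * a).factorial * p.factorial) := by
    rw [show 8 * a ^ 2 - 2 * a - 5 = (p + 3 * a + 3 + 1 * a) + p by omega,
      show 4 * a ^ 2 + a - 1 = p + 3 * a + 3 + 1 * a by omega, Nat.cast_add_choose]
    congr 3; ring
  have hA : (4 * (a : ℝ) ^ 2) ^ (1 * a) ≠ 0 := by positivity
  have hB : (8 * (a : ℝ) ^ 2) ^ (2 * a) ≠ 0 := by positivity
  have hC : (4 * (a : ℝ) ^ 2) ^ (3 * a) = ((4 * (a : ℝ) ^ 2) ^ (1 * a)) ^ 3 := by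
    rw [← pow_mul]; congr 1; ring
  rw [hC] at f3
  have g (n : ℕ) : (n.factorial : ℝ) ≠ 0 := by positivity
  have n1 := g (p + 3 * a + 3 + 1 * a)
  have n2 := g (p + 3 * a + 4 + 1 * a)
  have n3 := g (p + 3 * a)
  have n4 := g (2 * p + 6 * a + 7 + 2 * a)
  have n5 := g (2 * p + 4 * a + 3 + 2 * a)
  rw [f1] at n1
  rw [f2] at n2
  rw [f3] at n3
  rw [f4] at n4
  rw [f5] at n5
  rw [binRatio, c1, c2, c3, c4, f1, f2, f3, f4, f5]
  have m1 := g p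
  have m2 := g (p + 3 * a + 3)
  have m3 := g (p + 3 * a + 4)
  have m4 := g (2 * p + 6 * a + 7)
  have m5 := g (2 * p + 4 * a + 3)
  generalize (4 * (a : ℝ) ^ 2) ^ (1 * a) = A at *
  generalize (8 * (a : ℝ) ^ 2) ^ (2 * a) = B at *
  generalize (p.factorial : ℝ) = P at *
  generalize ((p + 3 * a + 3).factorial : ℝ) = P3 at *
  generalize ((p + 3 * a + 4).factorial : ℝ) = P4 at *
  generalize ((2 * p + 6 * a + 7).factorial : ℝ) = P7 at *
  generalize ((2 * p + 4 * a + 3).factorial : ℝ) = P5 at *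
  simp only [ne_eq, mul_eq_zero, not_or] at n1 n2 n3 n4 n5
  obtain ⟨-, -, n1⟩ := n1
  obtain ⟨-, -, n2⟩ := n2
  obtain ⟨-, -, n3⟩ := n3
  obtain ⟨-, -, n4⟩ := n4
  obtain ⟨-, -, n5⟩ := n5
  clear f1 f2 f3 f4 f5 c1 c2 c3 c4 hC g
  field_simp

theorem binRatio_tendsto : Tendsto binRatio atTop (nhds (Real.exp 1)) := by
  have h := ((((fpr_tendsto 4 0 0 (by norm_num) 1).pow 2).mul
    (fpr_tendsto 4 0 1 (by norm_num) 1)).mul (fpr_tendsto 8 (-2) (-4) (by norm_num) 2)).div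
    ((fpr_tendsto 4 (-3) (-3) (by norm_num) 3).mul (fpr_tendsto 8 0 0 (by norm_num) 2))
    (by positivity)
  rw [← Real.exp_nat_mul, ← Real.exp_add, ← Real.exp_add, ← Real.exp_add, ← Real.exp_sub] at h
  norm_num at h
  refine h.congr' ?_
  filter_upwards [eventually_ge_atTop 2] with a ha
  rw [binRatio_eq a ha]
  rfl

theorem pref_tendsto : Tendsto (fun a : ℕ => (a : ℝ) ^ 3 *
    (((32 * (a : ℝ) ^ 2 * ((a : ℝ) ^ 2 - 1) - 6) * (4 * (a : ℝ) + 1) / (4 * (a : ℝ))) /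
      ((4 * (a : ℝ) ^ 2 + 2) * (4 * (a : ℝ) ^ 2 + 1) * (4 * (a : ℝ) ^ 2 - 3) * ((a : ℝ) + 1))))
    atTop (nhds (1 / 2)) := by
  have hinv : Tendsto (fun a : ℕ => ((a : ℝ))⁻¹) atTop (nhds 0) := tendsto_inv_atTop_nhds_zero_nat
  have hc : ContinuousAt (fun x : ℝ => ((32 * (1 - x ^ 2) - 6 * x ^ 4) * (4 + x) / 4) /
      ((4 + 2 * x ^ 2) * (4 + x ^ 2) * (4 - 3 * x ^ 2) * (1 + x))) 0 := by
    apply ContinuousAt.div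
    · fun_prop
    · fun_prop
    · norm_num
  have h := hc.tendsto.comp hinv
  norm_num at h
  refine (h.congr' ?_)
  filter_upwards [eventually_ge_atTop 2] with a ha
  have h2 : (2 : ℝ) ≤ a := by exact_mod_cast ha
  have h3 : (4 * (a : ℝ) ^ 2 - 3) ≠ 0 := by nlinarith
  have h0 : (a : ℝ) ≠ 0 := by positivity
  have h4 : (4 - 3 * ((a : ℝ)⁻¹) ^ 2) ≠ 0 := by
    have : (4 - 3 * ((a : ℝ)⁻¹) ^ 2) = (4 * (a : ℝ) ^ 2 - 3) / a ^ 2 := by field_simp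
    rw [this]; positivity
  have h5 : (1 + (a : ℝ)⁻¹) ≠ 0 := by positivity
  have h6 : (4 + 2 * ((a : ℝ)⁻¹) ^ 2) ≠ 0 := by positivity
  have h7 : (4 + ((a : ℝ)⁻¹) ^ 2) ≠ 0 := by positivity
  simp only [Function.comp_apply]
  rw [mul_div_assoc', div_eq_div_iff (by positivity) (by positivity)]
  field_simp

/-- With `α = 1/a`, as `a → ∞`: `R(a) = (e/2)α³ + o(α³)`, where `e` is Euler's number. -/
theorem stmt18 :
    (fun a : ℕ => Rfn a - (Real.exp 1 / 2) / (a : ℝ) ^ 3)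
      =o[atTop] (fun a : ℕ => 1 / (a : ℝ) ^ 3) := by
  rw [isLittleO_iff_tendsto']
  · have h := (pref_tendsto.mul binRatio_tendsto).sub_const (Real.exp 1 / 2)
    rw [show 1 / 2 * Real.exp 1 - Real.exp 1 / 2 = 0 by ring] at h
    refine h.congr' ?_
    filter_upwards [eventually_gt_atTop 0] with a ha
    have h0 : (a : ℝ) ≠ 0 := by positivity
    rw [div_div_eq_mul_div, div_one, sub_mul (Rfn a), div_mul_cancel₀ _ (pow_ne_zero 3 h0), Rfn]
    ring
  · filter_upwards [eventually_gt_atTop 0] with a ha h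
    have : (0 : ℝ) < 1 / (a : ℝ) ^ 3 := by positivity
    exact absurd h this.ne'
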